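/- arXiv:2111.08886 — 2 statements merged into one kernel-verified Lean document; each statement's English description precedes it below -/
import Mathlib

section
/- Let p > 3 be a prime, let r > 2 be a natural number with gcd(r, p − 1) = 1, and let k be a natural number with p − 1 dividing kr − 1. For Q ∈ F_p[x], the set (xʳ, Q) = {(xʳ, Q(x)) : x ∈ F_p} is a maximum Sidon set over F_p × F_p if and only if the reduction of the composed polynomial Q(xᵏ) modulo x^p − x is a quadratic polynomial. -/
open Polynomial

/-- A subset `A` of an abelian group is a Sidon set if whenever
`a₁ - a₂ = a₃ - a₄` with all four elements in `A`, then `{a₁, a₄} = {a₂, a₃}`. -/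
def IsSidon {G : Type*} [AddCommGroup G] (A : Set G) : Prop :=
  ∀ a₁ ∈ A, ∀ a₂ ∈ A, ∀ a₃ ∈ A, ∀ a₄ ∈ A,
    a₁ - a₂ = a₃ - a₄ → ({a₁, a₄} : Set G) = {a₂, a₃}

/-- The set `(P,Q) = {(P(x), Q(x)) : x ∈ F}`. -/
def polyGraph {F : Type*} [Field F] (P Q : F[X]) : Set (F × F) :=
  Set.range fun x : F => (P.eval x, Q.eval x)

/-- A maximum Sidon set over `F × F`: a Sidon set with exactly `|F|` elements. -/
def IsMaxSidon {F : Type*} [Field F] [Fintype F] (A : Set (F × F)) : Prop :=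
  IsSidon A ∧ A.ncard = Fintype.card F

/-- A polynomial `P` is Sidon if there is `Q` with `(P,Q)` a maximum Sidon set. -/
def IsSidonPoly {F : Type*} [Field F] [Fintype F] (P : F[X]) : Prop :=
  ∃ Q : F[X], IsMaxSidon (polyGraph P Q)

/-- A permutation polynomial: its evaluation map is a bijection of `F`. -/
def IsPermPoly {F : Type*} [Field F] (R : F[X]) : Prop :=
  Function.Bijective fun x : F => R.eval x

/-- Sidon equivalence: `P' = R ∘ P ∘ T` (as functions on `F`)
for permutation polynomials `R`, `T`. -/
def SidonEquiv {F : Type*} [Field F] (P P' : F[X]) : Prop :=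
  ∃ R T : F[X], IsPermPoly R ∧ IsPermPoly T ∧
    ∀ x : F, P'.eval x = R.eval (P.eval (T.eval x))

/-- A function is planar if all of its difference functions with nonzero shift are injective. -/
def IsPlanar {F : Type*} [AddCommGroup F] (f : F → F) : Prop :=
  ∀ d : F, d ≠ 0 → Function.Injective fun x => f (x + d) - f x

section Moments

variable {p : ℕ} [Fact p.Prime]

theorem IsPlanar.add_mul {F : Type*} [CommRing F] {f : F → F} (hf : IsPlanar f) (c : F) :
    IsPlanar fun x => f x + c * x := by
  intro d hd x y hxy
  apply hf d hd
  simp only at hxy ⊢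
  linear_combination hxy

theorem sum_pow_card_sub_one : ∑ x : ZMod p, x ^ (p - 1) = -1 := by
  have hp := (Fact.out : p.Prime).two_le
  have h : ∀ x : ZMod p, x ^ (p - 1) = 1 - if x = 0 then 1 else 0 := by
    intro x
    split_ifs with hx
    · rw [hx, zero_pow (by omega), sub_self]
    · rw [ZMod.pow_card_sub_one_eq_one hx, sub_zero]
  simp [h]

theorem sum_pow_eq_zero_of_lt {i : ℕ} (hi : i < p - 1) : ∑ x : ZMod p, x ^ i = 0 :=
  FiniteField.sum_pow_lt_card_sub_one (ZMod p) i (by rwa [ZMod.card])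

theorem sum_eval_eq_neg_coeff {P : (ZMod p)[X]} (hP : P.natDegree < p) :
    ∑ x : ZMod p, P.eval x = -P.coeff (p - 1) := by
  have hp := (Fact.out : p.Prime).two_le
  simp_rw [Polynomial.eval_eq_sum_range' hP]
  rw [Finset.sum_comm]
  simp_rw [← Finset.mul_sum]
  rw [Finset.sum_eq_single (p - 1)]
  · rw [sum_pow_card_sub_one, mul_neg_one]
  · intro i hi hne
    rw [Finset.mem_range] at hi
    rw [sum_pow_eq_zero_of_lt (by omega), mul_zero]
  · intro h
    exact absurd (Finset.mem_range.2 (by omega)) h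

/-- Power sums of the differences of a planar function. -/
theorem IsPlanar.sum_sum_sub_pow {g : ZMod p → ZMod p} (hg : IsPlanar g) {k : ℕ} (hk : 0 < k) :
    ∑ x, ∑ y, (g y - g x) ^ k = -∑ v : ZMod p, v ^ k := by
  have h1 : ∀ x, ∑ y, (g y - g x) ^ k = ∑ d, (g (x + d) - g x) ^ k := fun x =>
    (Equiv.sum_comp (Equiv.addLeft x) fun y => (g y - g x) ^ k).symm
  simp_rw [h1]
  rw [Finset.sum_comm]
  have h2 : ∀ d : ZMod p, ∑ x, (g (x + d) - g x) ^ k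
      = (1 - if d = 0 then 1 else 0) * ∑ v : ZMod p, v ^ k := by
    intro d
    split_ifs with hd
    · simp [hd, zero_pow hk.ne']
    · rw [sub_zero, one_mul]
      exact Function.Bijective.sum_comp (Finite.injective_iff_bijective.1 (hg d hd))
        fun v => v ^ k
  simp_rw [h2]
  rw [← Finset.sum_mul]
  simp

theorem sum_sum_sub_pow_eq (g : ZMod p → ZMod p) (k : ℕ) :
    ∑ x, ∑ y, (g y - g x) ^ k =
      ∑ i ∈ Finset.range (k + 1),
        (-1) ^ (k - i) * (k.choose i : ZMod p) * (∑ y, g y ^ i) * ∑ x, g x ^ (k - i) := by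
  have h : ∀ x y, (g y - g x) ^ k = ∑ i ∈ Finset.range (k + 1),
      (-1) ^ (k - i) * (k.choose i : ZMod p) * (g y ^ i * g x ^ (k - i)) := by
    intro x y
    rw [sub_eq_add_neg, add_pow]
    refine Finset.sum_congr rfl fun i _ => ?_
    rw [neg_pow (g x)]
    ring
  simp_rw [h]
  rw [Finset.sum_congr rfl fun x _ => Finset.sum_comm, Finset.sum_comm]
  refine Finset.sum_congr rfl fun i _ => ?_
  simp_rw [← Finset.mul_sum, ← Finset.sum_mul]
  rw [← Finset.mul_sum]
  ring

theorem sum_sum_sub_pow_two_mul {g : ZMod p → ZMod p} {i : ℕ}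
    (h : ∀ j < i, ∑ x, g x ^ j = 0) :
    ∑ x, ∑ y, (g y - g x) ^ (2 * i) =
      (-1) ^ i * ((2 * i).choose i : ZMod p) * (∑ x, g x ^ i) ^ 2 := by
  rw [sum_sum_sub_pow_eq, Finset.sum_eq_single i]
  · rw [show 2 * i - i = i by omega]
    ring
  · intro j hj hne
    rw [Finset.mem_range] at hj
    rcases lt_or_gt_of_ne hne with hlt | hlt
    · rw [h j hlt]; ring
    · rw [h (2 * i - j) (by omega)]; ring
  · intro hi
    exact absurd (Finset.mem_range.2 (by omega)) hi

theorem choose_ne_zero_of_lt {n i : ℕ} (hi : i ≤ n) (hn : n < p) :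
    (n.choose i : ZMod p) ≠ 0 := by
  rw [Ne, ZMod.natCast_eq_zero_iff]
  exact fun h => absurd (((Fact.out : p.Prime).dvd_factorial).1
    (h.trans ⟨_, by rw [← Nat.choose_mul_factorial_mul_factorial hi, mul_assoc]⟩)) (by omega)

theorem IsPlanar.sum_pow_eq_zero {g : ZMod p → ZMod p} (hg : IsPlanar g) (i : ℕ)
    (hi : 2 * i < p - 1) : ∑ x, g x ^ i = 0 := by
  induction i using Nat.strong_induction_on with
  | _ i ih =>
    rcases Nat.eq_zero_or_pos i with rfl | hpos
    · simp
    have h := sum_sum_sub_pow_two_mul fun j hj => ih j hj (by omega)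
    rw [hg.sum_sum_sub_pow (by omega), sum_pow_eq_zero_of_lt hi, neg_zero] at h
    have h' := choose_ne_zero_of_lt (show i ≤ 2 * i by omega) (show 2 * i < p by omega)
    simpa [h'] using h.symm

theorem IsPlanar.sum_pow_half {g : ZMod p → ZMod p} (hg : IsPlanar g) {m : ℕ}
    (hm : 2 * m = p - 1) :
    (-1) ^ m * ((2 * m).choose m : ZMod p) * (∑ x, g x ^ m) ^ 2 = 1 := by
  have hp := (Fact.out : p.Prime).two_le
  rw [← sum_sum_sub_pow_two_mul fun j hj => hg.sum_pow_eq_zero j (by omega),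
    hg.sum_sum_sub_pow (by omega), hm, sum_pow_card_sub_one, neg_neg]

/-- The power sum `∑ₓ (f x + c x)ᵐ` as a polynomial in `c`. -/
noncomputable def momentPoly (f : ZMod p → ZMod p) (m : ℕ) : (ZMod p)[X] :=
  ∑ x, (C x * X + C (f x)) ^ m

theorem eval_momentPoly (f : ZMod p → ZMod p) (m : ℕ) (c : ZMod p) :
    (momentPoly f m).eval c = ∑ x, (f x + c * x) ^ m := by
  simp only [momentPoly, eval_finsetSum, eval_pow, eval_add, eval_mul, eval_C, eval_X]
  exact Finset.sum_congr rfl fun x _ => by ring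

theorem coeff_momentPoly (f : ZMod p → ZMod p) (i j : ℕ) :
    (momentPoly f (i + j)).coeff i = ((i + j).choose i : ZMod p) * ∑ x, x ^ i * f x ^ j := by
  rw [momentPoly, finsetSum_coeff, Finset.mul_sum]
  refine Finset.sum_congr rfl fun x _ => ?_
  rw [add_pow, finsetSum_coeff, Finset.sum_eq_single i]
  · rw [mul_pow, ← C_pow, ← C_pow, ← C_eq_natCast, show i + j - i = j by omega,
      coeff_mul_C, coeff_mul_C, coeff_C_mul, coeff_X_pow_self]
    ring
  · intro b _ hb
    rw [mul_pow, ← C_pow, ← C_pow, ← C_eq_natCast, coeff_mul_C, coeff_mul_C, coeff_C_mul,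
      coeff_X_pow, if_neg (Ne.symm hb)]
    ring
  · intro h
    exact absurd (Finset.mem_range.2 (by omega)) h

theorem natDegree_momentPoly_le (f : ZMod p → ZMod p) (m : ℕ) :
    (momentPoly f m).natDegree ≤ m := by
  refine natDegree_sum_le_of_forall_le _ _ fun x _ => ?_
  refine natDegree_pow_le.trans ?_
  simpa using Nat.mul_le_mul_left m (natDegree_linear_le (a := x) (b := f x))

theorem eq_zero_of_forall_eval_eq_zero {P : (ZMod p)[X]} (hP : P.natDegree < p)
    (h : ∀ c, P.eval c = 0) : P = 0 :=
  eq_zero_of_natDegree_lt_card_of_eval_eq_zero P Function.injective_id h (by rwa [ZMod.card])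

theorem IsPlanar.sum_mul_pow_eq_zero {f : ZMod p → ZMod p} (hf : IsPlanar f) {i j : ℕ}
    (hij : 2 * (i + j) ≤ p - 1) (h : 0 < i ∨ 2 * (i + j) < p - 1) :
    ∑ x, x ^ i * f x ^ j = 0 := by
  have hp := (Fact.out : p.Prime).two_le
  have hdeg := natDegree_momentPoly_le f (i + j)
  have hcoeff : (momentPoly f (i + j)).coeff i = 0 := by
    rcases hij.lt_or_eq with hlt | heq
    · rw [eq_zero_of_forall_eval_eq_zero (P := momentPoly f (i + j)) (by omega), coeff_zero]
      intro c
      rw [eval_momentPoly]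
      exact (hf.add_mul c).sum_pow_eq_zero _ hlt
    · set e : ZMod p := (-1) ^ (i + j) * ((2 * (i + j)).choose (i + j) : ZMod p) with he
      have hsq : C e * momentPoly f (i + j) ^ 2 - 1 = 0 := by
        apply eq_zero_of_forall_eval_eq_zero
        · refine lt_of_le_of_lt (natDegree_sub_le _ _) ?_
          have h1 := natDegree_C_mul_le e (momentPoly f (i + j) ^ 2)
          have h2 := natDegree_pow_le (p := momentPoly f (i + j)) (n := 2)
          rw [natDegree_one]
          omega
        · intro c
          rw [eval_sub, eval_mul, eval_C, eval_pow, eval_momentPoly, eval_one, he,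
            (hf.add_mul c).sum_pow_half heq, sub_self]
      have hunit : IsUnit (momentPoly f (i + j)) := by
        refine IsUnit.of_mul_eq_one (C e * momentPoly f (i + j)) ?_
        linear_combination hsq
      exact coeff_eq_zero_of_natDegree_lt (by rw [natDegree_eq_zero_of_isUnit hunit]; omega)
  rw [coeff_momentPoly] at hcoeff
  exact (mul_eq_zero.1 hcoeff).resolve_left (choose_ne_zero_of_lt (by omega) (by omega))

theorem sum_pow_mul_eval_pow_ne_zero {P : (ZMod p)[X]} (hP : P ≠ 0) {i j : ℕ}
    (h : i + j * P.natDegree = p - 1) : ∑ x, x ^ i * P.eval x ^ j ≠ 0 := by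
  have hp := (Fact.out : p.Prime).two_le
  have hdeg : (X ^ i * P ^ j).natDegree = p - 1 := by
    rw [natDegree_mul (pow_ne_zero _ X_ne_zero) (pow_ne_zero _ hP), natDegree_X_pow,
      natDegree_pow, h]
  have hsum := sum_eval_eq_neg_coeff (P := X ^ i * P ^ j) (by omega)
  simp only [eval_mul, eval_pow, eval_X] at hsum
  rw [hsum, neg_ne_zero, ← hdeg]
  exact leadingCoeff_ne_zero.2 (mul_ne_zero (pow_ne_zero _ X_ne_zero) (pow_ne_zero _ hP))

/-- A planar polynomial function over a prime field of odd order at least five is quadratic. -/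
theorem natDegree_eq_two_of_isPlanar (hp : 3 < p) {P : (ZMod p)[X]} (hdeg : P.natDegree < p)
    (hP : IsPlanar fun x => P.eval x) : P.natDegree = 2 := by
  have hodd : p % 2 = 1 := (Fact.out : p.Prime).eq_two_or_odd.resolve_left (by omega)
  have hlow : 2 ≤ P.natDegree := by
    by_contra! hlt
    obtain ⟨a, b, rfl⟩ := exists_eq_X_add_C_of_natDegree_le_one (show P.natDegree ≤ 1 by omega)
    have h01 := hP 1 one_ne_zero (a₁ := 0) (a₂ := 1) (by simp; ring)
    exact zero_ne_one h01
  have hP0 : P ≠ 0 := by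
    rintro rfl
    simp at hlow
  by_contra hne
  set d := P.natDegree with hd
  rcases le_or_gt (p + 1) (2 * d) with hbig | hsmall
  · refine sum_pow_mul_eval_pow_ne_zero hP0 (i := p - 1 - d) (j := 1) (by omega) ?_
    exact hP.sum_mul_pow_eq_zero (by omega) (by omega)
  · have hdiv := Nat.mod_add_div (p - 1) d
    have hmod := Nat.mod_lt (p - 1) (show 0 < d by omega)
    have hq : 2 ≤ (p - 1) / d := (Nat.le_div_iff_mul_le (by omega)).2 (by omega)
    set q := (p - 1) / d
    set r := (p - 1) % d
    have hlt : 2 * (r + q) < p - 1 := by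
      obtain ⟨e, he⟩ : ∃ e, d = e + 3 := ⟨d - 3, by omega⟩
      have hmul : 2 * (e + 1) ≤ q * (e + 1) := Nat.mul_le_mul_right _ hq
      have hexp : d * q = q * (e + 1) + 2 * q := by rw [he]; ring
      have hrq : r < q * (e + 1) := by
        by_contra! hle
        obtain rfl : e = 0 := by omega
        have h9 : p = 9 := by omega
        exact absurd (h9 ▸ (Fact.out : p.Prime)) (by norm_num)
      omega
    refine sum_pow_mul_eval_pow_ne_zero hP0 (i := r) (j := q)
      (by rw [← hd, mul_comm q]; exact hdiv) ?_
    exact hP.sum_mul_pow_eq_zero hlt.le (Or.inr hlt)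

theorem isPlanar_of_natDegree_eq_two (hp : 3 < p) {P : (ZMod p)[X]} (hdeg : P.natDegree = 2) :
    IsPlanar fun x => P.eval x := by
  intro d hd x y hxy
  have h2 : (2 : ZMod p) ≠ 0 := by
    have : ((2 : ℕ) : ZMod p) ≠ 0 := by
      rw [Ne, ZMod.natCast_eq_zero_iff]
      exact fun h => absurd (Nat.le_of_dvd (by norm_num) h) (by omega)
    exact_mod_cast this
  have hlead : P.coeff 2 ≠ 0 := by
    rw [← hdeg]
    exact leadingCoeff_ne_zero.2 (by rintro rfl; simp at hdeg)
  simp only [eval_eq_sum_range, hdeg, Finset.sum_range_succ, Finset.sum_range_zero] at hxy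
  have h : 2 * P.coeff 2 * d * (x - y) = 0 := by linear_combination hxy
  exact sub_eq_zero.1 ((mul_eq_zero.1 h).resolve_left (mul_ne_zero (mul_ne_zero h2 hlead) hd))

theorem pow_eq_self_of_dvd (hp : 3 < p) {n : ℕ} (h : ((p : ℤ) - 1) ∣ ((n : ℤ) - 1))
    (x : ZMod p) : x ^ n = x := by
  rcases Nat.eq_zero_or_pos n with rfl | hn
  · have := Int.le_of_dvd one_pos (by simpa using h)
    omega
  obtain ⟨t, ht⟩ : p - 1 ∣ n - 1 := by
    zify [show 1 ≤ p by omega, show 1 ≤ n by omega]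
    exact h
  rw [show n = (p - 1) * t + 1 by omega, pow_succ, pow_mul]
  by_cases hx : x = 0
  · rw [hx, mul_zero]
  · rw [ZMod.pow_card_sub_one_eq_one hx, one_pow, one_mul]

end Moments

theorem isSidon_range_graph_iff {F : Type*} [AddCommGroup F] (f : F → F) :
    IsSidon (Set.range fun x => (x, f x)) ↔ IsPlanar f := by
  constructor
  · intro h d hd x y hxy
    have := h _ ⟨x + d, rfl⟩ _ ⟨x, rfl⟩ _ ⟨y + d, rfl⟩ _ ⟨y, rfl⟩
      (by simpa [Prod.ext_iff] using hxy)
    have hmem : (x, f x) ∈ ({(x + d, f (x + d)), (y, f y)} : Set (F × F)) := by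
      rw [this]; simp
    rcases hmem with h' | h'
    · simp [Prod.ext_iff, hd] at h'
    · exact congrArg Prod.fst h'
  · rintro h _ ⟨a, rfl⟩ _ ⟨b, rfl⟩ _ ⟨c, rfl⟩ _ ⟨e, rfl⟩ heq
    simp only [Prod.mk_sub_mk, Prod.mk.injEq] at heq
    obtain ⟨h1, h2⟩ := heq
    by_cases hab : a = b
    · subst hab
      have : c = e := by rw [sub_self] at h1; exact sub_eq_zero.1 h1.symm
      rw [this]
    · have hbe : b = e := by
        apply h (a - b) (sub_ne_zero.2 hab)
        simp only
        rw [add_sub_cancel, h1, add_sub_cancel, h2]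
      subst hbe
      have : a = c := sub_left_injective h1
      subst this
      exact Set.pair_comm _ _

/-- for `p > 3` prime, `r > 2` coprime to `p - 1`, and `k` with
`p - 1 ∣ kr - 1`, the set `(xʳ, Q)` is a maximum Sidon set iff the reduction of
`Q(xᵏ)` modulo `x^p - x` is quadratic. -/
theorem stmt_13 (p : ℕ) [Fact p.Prime] (hp : 3 < p)
    (r : ℕ) (hr : 2 < r) (hcop : Nat.Coprime r (p - 1))
    (k : ℕ) (hk : ((p : ℤ) - 1) ∣ ((k : ℤ) * r - 1))
    (Q : (ZMod p)[X]) :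
    IsMaxSidon (polyGraph ((X : (ZMod p)[X]) ^ r) Q) ↔
      ((Q.comp (X ^ k)) %ₘ (X ^ p - X)).natDegree = 2 := by
  have hmonic : (X ^ p - X : (ZMod p)[X]).Monic :=
    monic_X_pow_sub (by rw [degree_X]; exact_mod_cast (by omega : 1 < p))
  have hnat : (X ^ p - X : (ZMod p)[X]).natDegree = p :=
    FiniteField.X_pow_card_sub_X_natDegree_eq _ (by omega)
  set P := (Q.comp (X ^ k)) %ₘ (X ^ p - X) with hPdef
  have hdeg : P.natDegree < p := by
    have h := natDegree_modByMonic_lt (Q.comp (X ^ k)) hmonic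
      (fun h => by rw [h, natDegree_one] at hnat; omega)
    rwa [hnat] at h
  have heval : ∀ y, P.eval y = Q.eval (y ^ k) := by
    intro y
    have h := congrArg (eval y) (modByMonic_add_div (Q.comp (X ^ k)) (X ^ p - X))
    simpa [eval_comp, ZMod.pow_card] using h
  have hkr : ∀ x : ZMod p, x ^ (k * r) = x :=
    pow_eq_self_of_dvd hp (by exact_mod_cast hk)
  have hset : polyGraph ((X : (ZMod p)[X]) ^ r) Q = Set.range fun y => (y, P.eval y) := by
    ext z
    constructor
    · rintro ⟨x, rfl⟩
      exact ⟨x ^ r, by simp [heval, ← pow_mul, mul_comm r k, hkr]⟩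
    · rintro ⟨y, rfl⟩
      exact ⟨y ^ k, by simp [heval, ← pow_mul, hkr]⟩
  have hcard : (Set.range fun y : ZMod p => (y, P.eval y)).ncard = Fintype.card (ZMod p) := by
    rw [← Set.image_univ, Set.ncard_image_of_injective _ fun a b h => congrArg Prod.fst h,
      Set.ncard_univ, Nat.card_eq_fintype_card]
  rw [hset, IsMaxSidon, and_iff_left hcard, isSidon_range_graph_iff]
  exact ⟨natDegree_eq_two_of_isPlanar hp hdeg, isPlanar_of_natDegree_eq_two hp⟩
end

section
/- Let q be a prime power with char(F_q) > 3 and let k ∈ F_q be a nonsquare. Then: x³ ∼_S x if and only if q ≡ −1 (mod 6); x³ is not Sidon equivalent to x²; x³ − x is Sidon equivalent to neither x nor x²; x³ − kx is not Sidon equivalent to x; and x³ − kx ∼_S x² if and only if q = 5. -/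
open Polynomial

/-- Sidon equivalent polynomials have the same fibres up to a permutation of the field. -/
theorem SidonEquiv.exists_perm {F : Type*} [Field F] {P P' : F[X]} (h : SidonEquiv P P') :
    ∃ e : Equiv.Perm F, ∀ x y, P.eval x = P.eval y ↔ P'.eval (e x) = P'.eval (e y) := by
  obtain ⟨R, T, hR, hT, h⟩ := h
  refine ⟨(Equiv.ofBijective _ hT).symm, fun x y => ?_⟩
  have key : ∀ x, T.eval ((Equiv.ofBijective _ hT).symm x) = x :=
    fun x => (Equiv.ofBijective _ hT).apply_symm_apply x
  rw [h, h, key, key]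
  exact hR.injective.eq_iff.symm

theorem SidonEquiv.injective_of_X {F : Type*} [Field F] {P : F[X]}
    (h : SidonEquiv P (X : F[X])) {x y : F} (hxy : P.eval x = P.eval y) : x = y := by
  obtain ⟨e, he⟩ := h.exists_perm
  simpa using (he x y).1 hxy

/-- A polynomial equivalent to `X ^ 2` takes each value at most twice. -/
theorem SidonEquiv.eq_or_eq_of_X_sq {F : Type*} [Field F] {P : F[X]}
    (h : SidonEquiv P ((X : F[X]) ^ 2)) {x y z : F} (hxy : P.eval x = P.eval y)
    (hxz : P.eval x = P.eval z) : x = y ∨ x = z ∨ y = z := by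
  obtain ⟨e, he⟩ := h.exists_perm
  have h1 := (he x y).1 hxy
  have h2 := (he x z).1 hxz
  simp only [eval_pow, eval_X, sq_eq_sq_iff_eq_or_eq_neg] at h1 h2
  rcases h1 with h1 | h1
  · exact Or.inl (e.injective h1)
  rcases h2 with h2 | h2
  · exact Or.inr (Or.inl (e.injective h2))
  · exact Or.inr (Or.inr (e.injective (neg_injective (h1.symm.trans h2))))

/-- A polynomial equivalent to `X ^ 2` takes only one value exactly once. -/
theorem SidonEquiv.exists_ne_of_X_sq {F : Type*} [Field F] (h2 : (2 : F) ≠ 0) {P : F[X]}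
    (h : SidonEquiv P ((X : F[X]) ^ 2)) :
    ∃ s : F, ∀ x, x ≠ s → ∃ y, y ≠ x ∧ P.eval x = P.eval y := by
  obtain ⟨e, he⟩ := h.exists_perm
  refine ⟨e.symm 0, fun x hx => ⟨e.symm (-e x), fun hy => hx ?_, (he _ _).2 (by simp)⟩⟩
  rw [Equiv.symm_apply_eq] at hy
  have : 2 * e x = 0 := by linear_combination -hy
  rw [Equiv.eq_symm_apply]
  exact (mul_eq_zero.1 this).resolve_left h2

theorem FiniteField.pow_three_pow {F : Type*} [Field F] [Fintype F] {m : ℕ}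
    (hm : Fintype.card F = 6 * m + 5) (x : F) : (x ^ 3) ^ (4 * m + 3) = x := by
  have hx : x ^ (6 * m + 5) = x := hm ▸ FiniteField.pow_card x
  calc (x ^ 3) ^ (4 * m + 3) = x ^ (6 * m + 5) * x ^ (6 * m + 4) := by ring
    _ = x ^ (6 * m + 5) := by rw [hx, ← pow_succ', hx]
    _ = x := hx

theorem FiniteField.pow_three_injective {F : Type*} [Field F] [Fintype F]
    (h : Fintype.card F % 6 = 5) : Function.Injective fun x : F => x ^ 3 := by
  obtain ⟨m, hm⟩ : ∃ m, Fintype.card F = 6 * m + 5 := ⟨Fintype.card F / 6, by omega⟩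
  exact Function.LeftInverse.injective (g := fun x => x ^ (4 * m + 3))
    (FiniteField.pow_three_pow hm)

theorem FiniteField.card_mod_six {F : Type*} [Field F] [Fintype F] (hchar : 3 < ringChar F) :
    Fintype.card F % 6 = 1 ∨ Fintype.card F % 6 = 5 := by
  obtain ⟨n, hp, hn⟩ := FiniteField.card F (ringChar F)
  have h2 : Nat.Coprime 2 (Fintype.card F) := by
    rw [hn]
    exact ((Nat.coprime_primes Nat.prime_two hp).2 (by omega)).pow_right _
  have h3 : Nat.Coprime 3 (Fintype.card F) := by
    rw [hn]
    exact ((Nat.coprime_primes Nat.prime_three hp).2 (by omega)).pow_right _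
  rw [Nat.Prime.coprime_iff_not_dvd Nat.prime_two] at h2
  rw [Nat.Prime.coprime_iff_not_dvd Nat.prime_three] at h3
  omega

theorem FiniteField.card_mod_six_of_pow_three_injective {F : Type*} [Field F] [Fintype F]
    (hchar : 3 < ringChar F) (h : ∀ x : F, x ^ 3 = 1 → x = 1) : Fintype.card F % 6 = 5 := by
  classical
  refine (FiniteField.card_mod_six hchar).resolve_left fun h1 => ?_
  have hd : 3 ∣ Fintype.card Fˣ := by
    rw [Fintype.card_units]
    omega
  have : Fact (Nat.Prime 3) := ⟨Nat.prime_three⟩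
  obtain ⟨u, hu⟩ := exists_prime_orderOf_dvd_card 3 hd
  have hu3 : (u : F) ^ 3 = 1 := by
    rw [← Units.val_pow_eq_pow_val, ← hu, pow_orderOf_eq_one, Units.val_one]
  have : u = 1 := Units.ext (h u hu3)
  rw [this, orderOf_one] at hu
  omega

/-- The form `a ^ 2 + a * b + b ^ 2` represents every element off the diagonal. -/
theorem FiniteField.exists_ne_sq_add_mul_add_sq_eq {F : Type*} [Field F] [Fintype F]
    (h2 : (2 : F) ≠ 0) (h3 : (3 : F) ≠ 0) {k : F} (hk : k ≠ 0) :
    ∃ a b : F, a ≠ b ∧ a ^ 2 + a * b + b ^ 2 = k := by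
  have hodd : Fintype.card F % 2 = 1 := FiniteField.odd_card_of_char_ne_two fun hc => h2 (by
    have := ringChar.Nat.cast_ringChar (R := F)
    rw [hc] at this
    exact_mod_cast this)
  obtain ⟨u, v, huv⟩ := FiniteField.exists_root_sum_quadratic (f := (X : F[X]) ^ 2)
    (g := C 3 * X ^ 2 - C k) (by simp)
    (degree_sub_C (by rw [degree_C_mul_X_pow 2 h3]; decide) |>.trans (degree_C_mul_X_pow 2 h3))
    hodd
  simp only [eval_pow, eval_X, eval_sub, eval_mul, eval_C] at huv
  have hk' : (u - v) ^ 2 + (u - v) * (2 * v) + (2 * v) ^ 2 = k := by linear_combination huv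
  by_cases hne : u - v = 2 * v
  · refine ⟨2 * v, -2 * (2 * v), fun h => hk ?_, ?_⟩
    · have : 3 * (2 * v) = 0 := by linear_combination h
      have hv := (mul_eq_zero.1 this).resolve_left h3
      rw [← hk', hne, hv]
      ring
    · rw [← hk', hne]
      ring
  · exact ⟨_, _, hne, hk'⟩

theorem not_sidonEquiv_X_pow_three_X_sq {F : Type*} [Field F] (h2 : (2 : F) ≠ 0) :
    ¬ SidonEquiv ((X : F[X]) ^ 3) ((X : F[X]) ^ 2) := by
  intro h
  obtain ⟨a, b, ha, hab, h3⟩ : ∃ a b : F, a ≠ 0 ∧ b ≠ a ∧ a ^ 3 = b ^ 3 := by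
    obtain ⟨s, hs⟩ := h.exists_ne_of_X_sq h2
    obtain ⟨x, hx⟩ := exists_ne s
    obtain ⟨y, hy, hxy⟩ := hs x hx
    simp only [eval_pow, eval_X] at hxy
    refine ⟨x, y, fun h0 => hy ?_, hy, hxy⟩
    subst h0
    exact pow_eq_zero_iff (three_ne_zero) |>.1 (by rw [← hxy]; ring)
  have hb : b ≠ 0 := by
    rintro rfl
    exact ha (pow_eq_zero_iff (three_ne_zero) |>.1 (by rw [h3]; ring))
  have hc : a ^ 3 = (b ^ 2 / a) ^ 3 := by
    rw [div_pow, eq_div_iff (pow_ne_zero _ ha)]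
    linear_combination (a ^ 3 + b ^ 3) * h3
  rcases h.eq_or_eq_of_X_sq (x := a) (y := b) (z := b ^ 2 / a) (by simpa using h3)
    (by simpa using hc) with h' | h' | h'
  · exact hab h'.symm
  · rw [eq_div_iff ha, ← sq, sq_eq_sq_iff_eq_or_eq_neg] at h'
    rcases h' with h' | h'
    · exact hab h'.symm
    · rw [h'] at h3
      have : 2 * b ^ 3 = 0 := by linear_combination -h3
      exact (mul_ne_zero h2 (pow_ne_zero 3 hb)) this
  · rw [eq_div_iff ha, sq] at h'
    exact hab (mul_left_cancel₀ hb h').symm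

theorem card_le_five_of_sidonEquiv {F : Type*} [Field F] [Fintype F] (h2 : (2 : F) ≠ 0)
    {k : F} (hk : ¬ ∃ y : F, y ^ 2 = k)
    (h : SidonEquiv ((X : F[X]) ^ 3 - C k * X) ((X : F[X]) ^ 2)) : Fintype.card F ≤ 5 := by
  classical
  have hk0 : k ≠ 0 := fun h0 => hk ⟨0, by simp [h0]⟩
  obtain ⟨s, hs⟩ := h.exists_ne_of_X_sq h2
  have hs0 : s = 0 := by
    by_contra hne
    obtain ⟨y, hy, h0⟩ := hs 0 (Ne.symm hne)
    simp only [eval_sub, eval_pow, eval_X, eval_mul, eval_C] at h0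
    exact hk ⟨y, mul_left_cancel₀ hy (by linear_combination -h0)⟩
  subst hs0
  have key : ∀ x : F, x ≠ 0 → 3 * x ^ 2 = k ∨ 3 * x ^ 2 = 4 * k := by
    intro x hx
    obtain ⟨y, hy, hxy⟩ := hs x hx
    have hxy' := hxy
    simp only [eval_sub, eval_pow, eval_X, eval_mul, eval_C] at hxy'
    have hq : x ^ 2 + x * y + y ^ 2 = k :=
      mul_left_cancel₀ (sub_ne_zero.2 hy) (by linear_combination -hxy')
    rcases h.eq_or_eq_of_X_sq (z := -x - y) hxy (by
      simp only [eval_sub, eval_pow, eval_X, eval_mul, eval_C]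
      linear_combination (2 * x + y) * hq) with h' | h' | h'
    · exact absurd h'.symm hy
    · left
      linear_combination hq - (y - x) * h'
    · right
      linear_combination 4 * hq - (x + 2 * y) * h'
  have hcard : ∀ c : F, Fintype.card F ≤ 5 ∨ ¬ ∀ x : F, x ≠ 0 → x ^ 2 = 1 ∨ x ^ 2 = c ^ 2 := by
    intro c
    by_contra! hc
    obtain ⟨hlt, hc⟩ := hc
    have hsub : (Finset.univ : Finset F) ⊆ {0, 1, -1, c, -c} := by
      intro x _
      simp only [Finset.mem_insert, Finset.mem_singleton]
      by_cases hx : x = 0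
      · exact Or.inl hx
      · rcases hc x hx with h' | h'
        · rcases sq_eq_sq_iff_eq_or_eq_neg.1 (h'.trans (one_pow 2).symm) with h' | h' <;> simp [h']
        · rcases sq_eq_sq_iff_eq_or_eq_neg.1 h' with h' | h' <;> simp [h']
    exact absurd ((Finset.card_le_card hsub).trans Finset.card_le_five) (by
      rw [Finset.card_univ]; omega)
  rcases key 1 one_ne_zero with h1 | h1
  · refine (hcard 2).resolve_right (not_not.2 fun x hx => ?_)
    rcases key x hx with h' | h'
    · exact Or.inl (mul_left_cancel₀ hk0 (by linear_combination h' - x ^ 2 * h1))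
    · exact Or.inr (mul_left_cancel₀ hk0 (by linear_combination h' - x ^ 2 * h1))
  · have h4 : (4 : F) * k ≠ 0 := mul_ne_zero (by
      rw [show (4 : F) = 2 * 2 by norm_num]; exact mul_ne_zero h2 h2) hk0
    refine (hcard 2⁻¹).resolve_right (not_not.2 fun x hx => ?_)
    rcases key x hx with h' | h'
    · right
      refine mul_left_cancel₀ h4 ?_
      linear_combination h' - x ^ 2 * h1 - k * (2 * 2⁻¹ + 1) * mul_inv_cancel₀ h2
    · exact Or.inl (mul_left_cancel₀ h4 (by linear_combination h' - x ^ 2 * h1))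

theorem sidonEquiv_of_card_eq_five {F : Type*} [Field F] [Fintype F] {k : F}
    (hk : ¬ ∃ y : F, y ^ 2 = k) (hF : Fintype.card F = 5) :
    SidonEquiv ((X : F[X]) ^ 3 - C k * X) ((X : F[X]) ^ 2) := by
  have h5 : (5 : F) = 0 := by
    have := FiniteField.cast_card_eq_zero F
    rw [hF] at this
    exact_mod_cast this
  have h2 : (2 : F) ≠ 0 := fun h => one_ne_zero (α := F) (by linear_combination h5 - 2 * h)
  have hall : ∀ x : F, x = 0 ∨ x = 1 ∨ x = 2 ∨ x = 3 ∨ x = 4 := by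
    intro x
    have hx : x ^ 5 = x := hF ▸ FiniteField.pow_card x
    have : x * ((x - 1) * ((x - 2) * ((x - 3) * (x - 4)))) = 0 := by
      linear_combination hx + (-2 * x ^ 4 + 7 * x ^ 3 - 10 * x ^ 2 + 5 * x) * h5
    simpa only [mul_eq_zero, sub_eq_zero] using this
  have hcube := FiniteField.pow_three_injective (F := F) (by omega)
  have hk23 : k = 2 ∨ k = 3 := by
    rcases hall k with h | h | h | h | h
    · exact absurd ⟨0, by rw [h]; ring⟩ hk
    · exact absurd ⟨1, by rw [h]; ring⟩ hk
    · exact Or.inl h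
    · exact Or.inr h
    · exact absurd ⟨2, by rw [h]; ring⟩ hk
  rcases hk23 with rfl | rfl
  · refine ⟨-X, C 3 - (X - C 3) ^ 3, ?_, ?_, fun x => ?_⟩
    · refine Finite.injective_iff_bijective.1 fun x y hxy => ?_
      simpa using hxy
    · refine Finite.injective_iff_bijective.1 fun x y hxy => ?_
      simp only [eval_sub, eval_pow, eval_X, eval_C, sub_right_inj] at hxy
      simpa using hcube hxy
    · simp only [eval_sub, eval_pow, eval_X, eval_C, eval_mul, eval_neg]
      rcases hall x with rfl | rfl | rfl | rfl | rfl
      · linear_combination (5388) * h5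
      · linear_combination (262) * h5
      · linear_combination (12) * h5
      · linear_combination (6) * h5
      · linear_combination (4) * h5
  · refine ⟨C 2 * X, (X - C 1) ^ 3 + C 1, ?_, ?_, fun x => ?_⟩
    · refine Finite.injective_iff_bijective.1 fun x y hxy => ?_
      simp only [eval_mul, eval_X, eval_C] at hxy
      exact mul_left_cancel₀ h2 hxy
    · refine Finite.injective_iff_bijective.1 fun x y hxy => ?_
      simp only [eval_add, eval_sub, eval_pow, eval_X, eval_C, add_left_inj] at hxy
      simpa using hcube hxy
    · simp only [eval_add, eval_sub, eval_pow, eval_X, eval_C, eval_mul]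
      rcases hall x with rfl | rfl | rfl | rfl | rfl
      · linear_combination (0) * h5
      · linear_combination (1) * h5
      · linear_combination (0) * h5
      · linear_combination (-279) * h5
      · linear_combination (-8744) * h5

/-- equivalences between cubic classes and `x`, `x²`:
`x³ ∼ x` iff `q ≡ -1 (mod 6)`; `x³ ≁ x²`; `x³ - x` is equivalent to neither `x`
nor `x²`; `x³ - kx ≁ x`; and `x³ - kx ∼ x²` iff `q = 5`. -/
theorem stmt_15 {F : Type*} [Field F] [Fintype F] (hchar : 3 < ringChar F)
    (k : F) (hk : ¬ ∃ y : F, y ^ 2 = k) :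
    (SidonEquiv ((X : F[X]) ^ 3) (X : F[X]) ↔ Fintype.card F % 6 = 5) ∧
    ¬ SidonEquiv ((X : F[X]) ^ 3) ((X : F[X]) ^ 2) ∧
    ¬ SidonEquiv ((X : F[X]) ^ 3 - X) (X : F[X]) ∧
    ¬ SidonEquiv ((X : F[X]) ^ 3 - X) ((X : F[X]) ^ 2) ∧
    ¬ SidonEquiv ((X : F[X]) ^ 3 - C k * X) (X : F[X]) ∧
    (SidonEquiv ((X : F[X]) ^ 3 - C k * X) ((X : F[X]) ^ 2) ↔ Fintype.card F = 5) := by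
  have cast_ne : ∀ n : ℕ, 0 < n → n ≤ 3 → (n : F) ≠ 0 := fun n h0 h3 h => by
    have := Nat.le_of_dvd h0 ((ringChar.spec F n).1 h)
    omega
  have h2 : (2 : F) ≠ 0 := by exact_mod_cast cast_ne 2 (by norm_num) (by norm_num)
  have h3 : (3 : F) ≠ 0 := by exact_mod_cast cast_ne 3 (by norm_num) (by norm_num)
  have hk0 : k ≠ 0 := fun h0 => hk ⟨0, by simp [h0]⟩
  refine ⟨⟨fun h => ?_, fun h => ?_⟩, not_sidonEquiv_X_pow_three_X_sq h2, fun h => ?_,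
    fun h => ?_, fun h => ?_, fun h => ?_, sidonEquiv_of_card_eq_five hk⟩
  · refine FiniteField.card_mod_six_of_pow_three_injective hchar fun x hx => ?_
    exact h.injective_of_X (by simpa using hx)
  · obtain ⟨m, hm⟩ : ∃ m, Fintype.card F = 6 * m + 5 := ⟨Fintype.card F / 6, by omega⟩
    have hinv := FiniteField.pow_three_pow (F := F) hm
    refine ⟨X ^ (4 * m + 3), X, Finite.injective_iff_bijective.1 fun x y hxy => ?_,
      Finite.injective_iff_bijective.1 fun x y hxy => by simpa using hxy, fun x => ?_⟩
    · simp only [eval_pow, eval_X] at hxy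
      rw [← hinv x, ← hinv y, ← pow_mul, ← pow_mul, mul_comm, pow_mul, pow_mul, hxy]
    · simp [hinv]
  · exact zero_ne_one (h.injective_of_X (x := 0) (y := 1) (by simp))
  · rcases h.eq_or_eq_of_X_sq (x := 0) (y := 1) (z := -1) (by simp) (by simp; ring)
      with h' | h' | h'
    · exact zero_ne_one h'
    · exact one_ne_zero (α := F) (by linear_combination h')
    · exact h2 (by linear_combination h')
  · obtain ⟨a, b, hab, hq⟩ := FiniteField.exists_ne_sq_add_mul_add_sq_eq h2 h3 hk0
    refine hab (h.injective_of_X ?_)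
    simp only [eval_sub, eval_pow, eval_X, eval_mul, eval_C]
    linear_combination (a - b) * hq
  · have hle := card_le_five_of_sidonEquiv h2 hk h
    have hmod := FiniteField.card_mod_six hchar
    have := Fintype.one_lt_card (α := F)
    omega
end
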